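/- arXiv:2510.17709 — 6 statements merged into one kernel-verified Lean document; each statement's English description precedes it below -/
import Mathlib

section
/- Let E_k(t) = Σ_τ η(s_k,a_k) · P_k(t)(τ) be the stage-k expectation over trajectories of length k. Then for every t ∈ ℝ the derivative of E_k at t exists and equals Σ_τ η(s_k,a_k) · P_k(t)(τ) · ( (d/dt) log(π t s_k a_k) + Σ_{i=0}^{k-1} (d/dt) log( f t s_i a_i s_{i+1} · π t s_i a_i ) ), the sum ranging over all trajectories τ of length k. (Lemma 1: sensitivity of a Markov chain.) -/
theorem aux_hasDerivAt_log {g : ℝ → ℝ} {t : ℝ} (hpos : 0 < g t)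
    (hd : DifferentiableAt ℝ g t) :
    HasDerivAt g (g t * deriv (fun t => Real.log (g t)) t) t := by
  have h := hd.hasDerivAt
  have h2 := (h.log hpos.ne').deriv
  rw [h2, mul_div_cancel₀ _ hpos.ne']
  exact h

theorem aux_hasDerivAt_prod {ι : Type*} (s : Finset ι) {g : ℝ → ι → ℝ} {t : ℝ}
    (hpos : ∀ i, 0 < g t i) (hd : ∀ i, DifferentiableAt ℝ (fun t => g t i) t) :
    HasDerivAt (fun t => ∏ i ∈ s, g t i)
      ((∏ i ∈ s, g t i) * ∑ i ∈ s, deriv (fun t => Real.log (g t i)) t) t := by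
  classical
  induction s using Finset.induction_on with
  | empty => simpa using hasDerivAt_const t (1 : ℝ)
  | insert a s ha ih =>
    simp only [Finset.prod_insert ha, Finset.sum_insert ha]
    have h := (aux_hasDerivAt_log (g := fun t => g t a) (hpos a) (hd a)).fun_mul ih
    refine h.congr_deriv ?_
    ring

/-- Lemma 1 (sensitivity of a Markov chain): the stage-`k` expectation
`E_k(t) = Σ_τ η(s_k,a_k) · P_k(t)(τ)` is differentiable in `t`, with derivative
`Σ_τ η(s_k,a_k) · P_k(t)(τ) · (d/dt log π(a_k|s_k) + Σ_{i<k} d/dt log(f(s_{i+1}|s_i,a_i) π(a_i|s_i)))`. -/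
theorem markov_chain_sensitivity
    {S A : Type*} [Fintype S] [Fintype A] [Nonempty S] [Nonempty A]
    (k : ℕ) (ρ0 : S → ℝ) (η : S → A → ℝ)
    (π : ℝ → S → A → ℝ) (f : ℝ → S → A → S → ℝ)
    (hπpos : ∀ t s a, 0 < π t s a)
    (hπdiff : ∀ s a, Differentiable ℝ (fun t => π t s a))
    (hfpos : ∀ t s a s', 0 < f t s a s')
    (hfdiff : ∀ s a s', Differentiable ℝ (fun t => f t s a s'))
    (P : ℝ → ((Fin (k + 1) → S) × (Fin (k + 1) → A)) → ℝ)
    (hP : ∀ t τ, P t τ =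
      ρ0 (τ.1 0) * π t (τ.1 (Fin.last k)) (τ.2 (Fin.last k)) *
        ∏ i : Fin k,
          (f t (τ.1 i.castSucc) (τ.2 i.castSucc) (τ.1 i.succ) *
            π t (τ.1 i.castSucc) (τ.2 i.castSucc)))
    (t : ℝ) :
    HasDerivAt
      (fun t => ∑ τ : (Fin (k + 1) → S) × (Fin (k + 1) → A),
        η (τ.1 (Fin.last k)) (τ.2 (Fin.last k)) * P t τ)
      (∑ τ : (Fin (k + 1) → S) × (Fin (k + 1) → A),
        η (τ.1 (Fin.last k)) (τ.2 (Fin.last k)) * P t τ *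
          (deriv (fun t => Real.log (π t (τ.1 (Fin.last k)) (τ.2 (Fin.last k)))) t +
            ∑ i : Fin k,
              deriv (fun t =>
                Real.log (f t (τ.1 i.castSucc) (τ.2 i.castSucc) (τ.1 i.succ) *
                  π t (τ.1 i.castSucc) (τ.2 i.castSucc))) t)) t := by
  refine HasDerivAt.fun_sum fun τ _ => ?_
  simp only [hP]
  have h1 := aux_hasDerivAt_log
    (g := fun t => π t (τ.1 (Fin.last k)) (τ.2 (Fin.last k))) (t := t)
    (hπpos _ _ _) (hπdiff _ _ t)
  have h2 := aux_hasDerivAt_prod Finset.univ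
    (g := fun t (i : Fin k) => f t (τ.1 i.castSucc) (τ.2 i.castSucc) (τ.1 i.succ) *
      π t (τ.1 i.castSucc) (τ.2 i.castSucc)) (t := t)
    (fun i => mul_pos (hfpos _ _ _ _) (hπpos _ _ _))
    (fun i => (hfdiff _ _ _ t).fun_mul (hπdiff _ _ t))
  refine (((h1.const_mul (ρ0 (τ.1 0))).fun_mul h2).const_mul _).congr_deriv ?_
  ring
end

section
/- Suppose the transition kernel f : S → A → S → ℝ is fixed (independent of the parameter t) with f s a s' > 0 for all arguments, while only the policy π depends on t. Then for every t ∈ ℝ the derivative of the stage-k expectation E_k(t) = Σ_τ η(s_k,a_k) · P_k(t)(τ) equals Σ_τ η(s_k,a_k) · P_k(t)(τ) · Σ_{i=0}^{k} (d/dt) log(π t s_i a_i). (Policy-parameter specialization of Lemma 1, underlying the estimator for the gradient of the in-sim distribution with respect to the policy parameters.) -/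
theorem hasDerivAt_prod_log_aux (n : ℕ) (g : Fin n → ℝ → ℝ) (t : ℝ)
    (hpos : ∀ i, 0 < g i t) (hd : ∀ i, DifferentiableAt ℝ (g i) t) :
    HasDerivAt (fun t => ∏ i, g i t)
      ((∏ i, g i t) * ∑ i, deriv (fun t => Real.log (g i t)) t) t := by
  induction n with
  | zero => simpa using hasDerivAt_const t (1 : ℝ)
  | succ n ih =>
    have h1 := ih (fun i => g i.castSucc) (fun i => hpos _) (fun i => hd _)
    have h2 := (hd (Fin.last n)).hasDerivAt
    have h3 : deriv (fun t => Real.log (g (Fin.last n) t)) t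
        = deriv (g (Fin.last n)) t / g (Fin.last n) t :=
      (h2.log (hpos _).ne').deriv
    have h4 := h1.mul h2
    simp only [Fin.prod_univ_castSucc, Fin.sum_univ_castSucc]
    refine h4.congr_deriv ?_
    rw [h3]
    have := (hpos (Fin.last n)).ne'
    field_simp

/-- Policy-parameter specialization of Lemma 1: with a fixed transition kernel `f`
and a parameterized policy `π`, the derivative of the stage-`k` expectation equals
`Σ_τ η(s_k,a_k) · P_k(t)(τ) · Σ_{i=0}^{k} d/dt log π(a_i|s_i)`. -/
theorem markov_chain_sensitivity_policy_params
    {S A : Type*} [Fintype S] [Fintype A] [Nonempty S] [Nonempty A]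
    (k : ℕ) (ρ0 : S → ℝ) (η : S → A → ℝ)
    (π : ℝ → S → A → ℝ) (f : S → A → S → ℝ)
    (hπpos : ∀ t s a, 0 < π t s a)
    (hπdiff : ∀ s a, Differentiable ℝ (fun t => π t s a))
    (hfpos : ∀ s a s', 0 < f s a s')
    (P : ℝ → ((Fin (k + 1) → S) × (Fin (k + 1) → A)) → ℝ)
    (hP : ∀ t τ, P t τ =
      ρ0 (τ.1 0) * π t (τ.1 (Fin.last k)) (τ.2 (Fin.last k)) *
        ∏ i : Fin k,
          (f (τ.1 i.castSucc) (τ.2 i.castSucc) (τ.1 i.succ) *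
            π t (τ.1 i.castSucc) (τ.2 i.castSucc)))
    (t : ℝ) :
    HasDerivAt
      (fun t => ∑ τ : (Fin (k + 1) → S) × (Fin (k + 1) → A),
        η (τ.1 (Fin.last k)) (τ.2 (Fin.last k)) * P t τ)
      (∑ τ : (Fin (k + 1) → S) × (Fin (k + 1) → A),
        η (τ.1 (Fin.last k)) (τ.2 (Fin.last k)) * P t τ *
          ∑ i : Fin (k + 1), deriv (fun t => Real.log (π t (τ.1 i) (τ.2 i))) t) t := by
  refine HasDerivAt.fun_sum fun τ _ => ?_
  have key : ∀ t, P t τ = (ρ0 (τ.1 0) *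
      ∏ i : Fin k, f (τ.1 i.castSucc) (τ.2 i.castSucc) (τ.1 i.succ)) *
      ∏ i : Fin (k + 1), π t (τ.1 i) (τ.2 i) := by
    intro t
    rw [hP, Finset.prod_mul_distrib, Fin.prod_univ_castSucc]
    ring
  have h := hasDerivAt_prod_log_aux (k + 1) (fun i t => π t (τ.1 i) (τ.2 i)) t
    (fun i => hπpos _ _ _) (fun i => hπdiff _ _ t)
  simp only [key]
  refine ((h.const_mul _).const_mul _).congr_deriv ?_
  ring
end

section
/- Suppose the policy π : S → A → ℝ is fixed (independent of the parameter t) with π s a > 0 for all arguments, while only the transition kernel f depends on t. Then for every t ∈ ℝ the derivative of the stage-k expectation E_k(t) = Σ_τ η(s_k,a_k) · P_k(t)(τ) equals Σ_τ η(s_k,a_k) · P_k(t)(τ) · Σ_{i=0}^{k-1} (d/dt) log(f t s_i a_i s_{i+1}). (Model-parameter specialization of Lemma 1, underlying the estimator for the gradient of the in-sim distribution with respect to the simulator parameters.) -/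
/-- Logarithmic-derivative form of the product rule. -/
theorem hasDerivAt_prod_log_form {ι : Type*} (s : Finset ι) (g : ι → ℝ → ℝ) (d : ι → ℝ) (t : ℝ)
    (h : ∀ i, HasDerivAt (g i) (g i t * d i) t) :
    HasDerivAt (fun x => ∏ i ∈ s, g i x) ((∏ i ∈ s, g i t) * ∑ i ∈ s, d i) t := by
  classical
  induction s using Finset.induction_on with
  | empty => simpa using hasDerivAt_const t (1 : ℝ)
  | insert a s ha ih =>
    simp only [Finset.prod_insert ha, Finset.sum_insert ha]
    refine ((h a).fun_mul ih).congr_deriv ?_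
    ring

/-- Model-parameter specialization of Lemma 1: with a fixed policy `π` and a
parameterized transition kernel `f`, the derivative of the stage-`k` expectation equals
`Σ_τ η(s_k,a_k) · P_k(t)(τ) · Σ_{i=0}^{k-1} d/dt log f(s_{i+1}|s_i,a_i)`. -/
theorem markov_chain_sensitivity_model_params
    {S A : Type*} [Fintype S] [Fintype A] [Nonempty S] [Nonempty A]
    (k : ℕ) (ρ0 : S → ℝ) (η : S → A → ℝ)
    (π : S → A → ℝ) (f : ℝ → S → A → S → ℝ)
    (hπpos : ∀ s a, 0 < π s a)
    (hfpos : ∀ t s a s', 0 < f t s a s')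
    (hfdiff : ∀ s a s', Differentiable ℝ (fun t => f t s a s'))
    (P : ℝ → ((Fin (k + 1) → S) × (Fin (k + 1) → A)) → ℝ)
    (hP : ∀ t τ, P t τ =
      ρ0 (τ.1 0) * π (τ.1 (Fin.last k)) (τ.2 (Fin.last k)) *
        ∏ i : Fin k,
          (f t (τ.1 i.castSucc) (τ.2 i.castSucc) (τ.1 i.succ) *
            π (τ.1 i.castSucc) (τ.2 i.castSucc)))
    (t : ℝ) :
    HasDerivAt
      (fun t => ∑ τ : (Fin (k + 1) → S) × (Fin (k + 1) → A),
        η (τ.1 (Fin.last k)) (τ.2 (Fin.last k)) * P t τ)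
      (∑ τ : (Fin (k + 1) → S) × (Fin (k + 1) → A),
        η (τ.1 (Fin.last k)) (τ.2 (Fin.last k)) * P t τ *
          ∑ i : Fin k,
            deriv (fun t =>
              Real.log (f t (τ.1 i.castSucc) (τ.2 i.castSucc) (τ.1 i.succ))) t) t := by
  refine HasDerivAt.fun_sum fun τ _ => ?_
  simp only [hP]
  rw [mul_assoc, mul_assoc (ρ0 _ * _)]
  refine HasDerivAt.const_mul _ (HasDerivAt.const_mul _ ?_)
  refine hasDerivAt_prod_log_form Finset.univ
    (fun (i : Fin k) x => f x (τ.1 i.castSucc) (τ.2 i.castSucc) (τ.1 i.succ) *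
      π (τ.1 i.castSucc) (τ.2 i.castSucc)) _ t fun i => ?_
  have hd := (hfdiff (τ.1 i.castSucc) (τ.2 i.castSucc) (τ.1 i.succ) t).hasDerivAt
  have hne := (hfpos t (τ.1 i.castSucc) (τ.2 i.castSucc) (τ.1 i.succ)).ne'
  rw [(hd.log hne).deriv]
  refine (hd.mul_const _).congr_deriv ?_
  field_simp
end

section
/- Suppose Q : ℝ → S → A → ℝ and V : ℝ → S → ℝ are differentiable in the parameter t and satisfy, for all t, s, a, the policy-evaluation Bellman equations Q t s a = R t s a + γ · Σ_{s'} f t s a s' · V t s' and V t s = Σ_a π t s a · Q t s a. Then for all t, s, a: (d/dt) Q t s a = (d/dt) R t s a + γ · Σ_{s'} f t s a s' · ( (d/dt) V t s' + V t s' · (d/dt) log(f t s a s') ), and (d/dt) V t s = Σ_a π t s a · ( (d/dt) Q t s a + Q t s a · (d/dt) log(π t s a) ). (Lemma 2: sensitivities of Q^π and V^π.) -/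
theorem hasDerivAt_sum_mul_log_aux {ι : Type*} [Fintype ι] (p v : ℝ → ι → ℝ) (t : ℝ)
    (hpos : ∀ i, 0 < p t i)
    (hp : ∀ i, Differentiable ℝ (fun t => p t i))
    (hv : ∀ i, Differentiable ℝ (fun t => v t i)) :
    HasDerivAt (fun t => ∑ i, p t i * v t i)
      (∑ i, p t i * (deriv (fun t => v t i) t +
        v t i * deriv (fun t => Real.log (p t i)) t)) t := by
  apply HasDerivAt.fun_sum
  intro i _
  have hne : p t i ≠ 0 := (hpos i).ne'
  have h1 := (hp i t).hasDerivAt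
  have h2 := (hv i t).hasDerivAt
  have h3 := (h1.log hne).deriv
  rw [h3]
  refine (h1.mul h2).congr_deriv ?_
  field_simp
  ring

/-- Lemma 2 (sensitivities of `Q^π` and `V^π`): if `Q` and `V` satisfy the
policy-evaluation Bellman equations for a parameterized reward `R`, kernel `f`
and policy `π`, then their derivatives in the parameter satisfy the stated recursions. -/
theorem policy_evaluation_sensitivity
    {S A : Type*} [Fintype S] [Fintype A] [Nonempty S] [Nonempty A]
    (γ : ℝ)
    (R : ℝ → S → A → ℝ) (f : ℝ → S → A → S → ℝ) (π : ℝ → S → A → ℝ)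
    (Q : ℝ → S → A → ℝ) (V : ℝ → S → ℝ)
    (hRdiff : ∀ s a, Differentiable ℝ (fun t => R t s a))
    (hfpos : ∀ t s a s', 0 < f t s a s')
    (hfdiff : ∀ s a s', Differentiable ℝ (fun t => f t s a s'))
    (hπpos : ∀ t s a, 0 < π t s a)
    (hπdiff : ∀ s a, Differentiable ℝ (fun t => π t s a))
    (hQdiff : ∀ s a, Differentiable ℝ (fun t => Q t s a))
    (hVdiff : ∀ s, Differentiable ℝ (fun t => V t s))
    (hBellQ : ∀ t (s : S) (a : A), Q t s a = R t s a + γ * ∑ s', f t s a s' * V t s')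
    (hBellV : ∀ t (s : S), V t s = ∑ a, π t s a * Q t s a) :
    (∀ t (s : S) (a : A),
      deriv (fun t => Q t s a) t =
        deriv (fun t => R t s a) t +
          γ * ∑ s', f t s a s' *
            (deriv (fun t => V t s') t +
              V t s' * deriv (fun t => Real.log (f t s a s')) t)) ∧
    (∀ t (s : S),
      deriv (fun t => V t s) t =
        ∑ a, π t s a *
          (deriv (fun t => Q t s a) t +
            Q t s a * deriv (fun t => Real.log (π t s a)) t)) := by
  refine ⟨fun t s a => ?_, fun t s => ?_⟩
  · have h := hasDerivAt_sum_mul_log_aux (fun t s' => f t s a s') V t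
      (fun s' => hfpos t s a s') (fun s' => hfdiff s a s') hVdiff
    have h' := (hRdiff s a t).hasDerivAt.add (h.const_mul γ)
    have e : (fun t => Q t s a) = fun t => R t s a + γ * ∑ s', f t s a s' * V t s' :=
      funext fun t => hBellQ t s a
    rw [e]
    exact h'.deriv
  · have h := hasDerivAt_sum_mul_log_aux (fun t a => π t s a) (fun t a => Q t s a) t
      (fun a => hπpos t s a) (fun a => hπdiff s a) (fun a => hQdiff s a)
    have e : (fun t => V t s) = fun t => ∑ a, π t s a * Q t s a :=
      funext fun t => hBellV t s
    rw [e]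
    exact h.deriv
end

section
/- Let ĝ(φ,θ) = Σ_{k=0}^{N} γ^k · Σ_τ P_k(φ,θ)(τ) · ∂_φ log(π φ s_k a_k) · Q̂ φ θ s_k a_k be the finite-horizon in-sim stochastic policy gradient. Then for every (φ,θ) the partial derivative of ĝ with respect to the simulator parameter θ exists and equals Σ_{k=0}^{N} γ^k · Σ_τ P_k(φ,θ)(τ) · ( ∂_φ log(π φ s_k a_k) · ∂_θ (Q̂ φ θ s_k a_k) + ∂_φ log(π φ s_k a_k) · Q̂ φ θ s_k a_k · Σ_{i=0}^{k-1} ∂_θ log(f θ s_i a_i s_{i+1}) ), i.e., it decomposes into a critic-sensitivity term and a distribution-sensitivity term. (Decomposition of ∇_θ ĝ used in Theorem 1, Eq. (18).) -/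
/-- Log-derivative trick for a finite product of positive differentiable factors with
constant multipliers. -/
theorem hasDerivAt_prod_log {ι : Type*} (s : Finset ι) (g : ι → ℝ → ℝ) (c : ι → ℝ) (x : ℝ)
    (hpos : ∀ i, 0 < g i x) (hd : ∀ i, DifferentiableAt ℝ (g i) x) :
    HasDerivAt (fun y => ∏ i ∈ s, (g i y * c i))
      ((∏ i ∈ s, (g i x * c i)) * ∑ i ∈ s, deriv (fun y => Real.log (g i y)) x) x := by
  classical
  induction s using Finset.induction_on with
  | empty => simpa using hasDerivAt_const x (1 : ℝ)
  | insert a s ha ih =>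
    simp only [Finset.prod_insert ha, Finset.sum_insert ha]
    have h := ((hd a).hasDerivAt.mul_const (c a)).mul ih
    refine h.congr_deriv ?_
    have hl : deriv (fun y => Real.log (g a y)) x = deriv (g a) x / g a x :=
      ((hd a).hasDerivAt.log (hpos a).ne').deriv
    have hne := (hpos a).ne'
    rw [hl]
    field_simp

/-- Decomposition of `∇_θ ĝ` (used in Theorem 1, Eq. (18)): the partial derivative of
the finite-horizon in-sim stochastic policy gradient w.r.t. the simulator parameter `θ`
exists and decomposes into a critic-sensitivity term and a distribution-sensitivity term. -/
theorem spg_sensitivity_wrt_simulator_params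
    {S A : Type*} [Fintype S] [Fintype A] [Nonempty S] [Nonempty A]
    (N : ℕ) (γ : ℝ) (ρ0 : S → ℝ)
    (π : ℝ → S → A → ℝ) (f : ℝ → S → A → S → ℝ)
    (Qh : ℝ → ℝ → S → A → ℝ)
    (hπpos : ∀ φ s a, 0 < π φ s a)
    (hπdiff : ∀ s a, Differentiable ℝ (fun φ => π φ s a))
    (hπdiff2 : ∀ s a, Differentiable ℝ (deriv (fun φ => π φ s a)))
    (hfpos : ∀ θ s a s', 0 < f θ s a s')
    (hfdiff : ∀ s a s', Differentiable ℝ (fun θ => f θ s a s'))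
    (hQdiffφ : ∀ θ s a, Differentiable ℝ (fun φ => Qh φ θ s a))
    (hQdiffθ : ∀ φ s a, Differentiable ℝ (fun θ => Qh φ θ s a))
    (P : ∀ k : ℕ, ℝ → ℝ → ((Fin (k + 1) → S) × (Fin (k + 1) → A)) → ℝ)
    (hP : ∀ k φ θ τ, P k φ θ τ =
      ρ0 (τ.1 0) * π φ (τ.1 (Fin.last k)) (τ.2 (Fin.last k)) *
        ∏ i : Fin k,
          (f θ (τ.1 i.castSucc) (τ.2 i.castSucc) (τ.1 i.succ) *
            π φ (τ.1 i.castSucc) (τ.2 i.castSucc)))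
    (φ θ : ℝ) :
    HasDerivAt
      (fun θ' => ∑ k ∈ Finset.range (N + 1), γ ^ k *
        ∑ τ : (Fin (k + 1) → S) × (Fin (k + 1) → A),
          P k φ θ' τ *
            deriv (fun φ => Real.log (π φ (τ.1 (Fin.last k)) (τ.2 (Fin.last k)))) φ *
            Qh φ θ' (τ.1 (Fin.last k)) (τ.2 (Fin.last k)))
      (∑ k ∈ Finset.range (N + 1), γ ^ k *
        ∑ τ : (Fin (k + 1) → S) × (Fin (k + 1) → A),
          P k φ θ τ *
            (deriv (fun φ => Real.log (π φ (τ.1 (Fin.last k)) (τ.2 (Fin.last k)))) φ *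
                deriv (fun θ' => Qh φ θ' (τ.1 (Fin.last k)) (τ.2 (Fin.last k))) θ +
              deriv (fun φ => Real.log (π φ (τ.1 (Fin.last k)) (τ.2 (Fin.last k)))) φ *
                Qh φ θ (τ.1 (Fin.last k)) (τ.2 (Fin.last k)) *
                ∑ i : Fin k,
                  deriv (fun θ' =>
                    Real.log (f θ' (τ.1 i.castSucc) (τ.2 i.castSucc) (τ.1 i.succ))) θ)) θ := by
  refine HasDerivAt.fun_sum fun k _ => HasDerivAt.const_mul _ ?_
  refine HasDerivAt.fun_sum fun τ _ => ?_
  simp only [hP]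
  have h1 := hasDerivAt_prod_log Finset.univ
    (fun (i : Fin k) θ' => f θ' (τ.1 i.castSucc) (τ.2 i.castSucc) (τ.1 i.succ))
    (fun i => π φ (τ.1 i.castSucc) (τ.2 i.castSucc)) θ
    (fun i => hfpos _ _ _ _) (fun i => hfdiff _ _ _ _)
  have h2 := (hQdiffθ φ (τ.1 (Fin.last k)) (τ.2 (Fin.last k)) θ).hasDerivAt
  have h3 := ((h1.const_mul (ρ0 (τ.1 0) * π φ (τ.1 (Fin.last k)) (τ.2 (Fin.last k)))).mul_const
    (deriv (fun φ => Real.log (π φ (τ.1 (Fin.last k)) (τ.2 (Fin.last k)))) φ)).mul h2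
  refine h3.congr_deriv ?_
  ring
end

section
/- Let ĝ(φ,θ) = Σ_{k=0}^{N} γ^k · Σ_τ P_k(φ,θ)(τ) · ∂_φ log(π φ s_k a_k) · Q̂ φ θ s_k a_k be the finite-horizon in-sim stochastic policy gradient. Then for every (φ,θ) the partial derivative of ĝ with respect to the policy parameter φ exists and equals Σ_{k=0}^{N} γ^k · Σ_τ P_k(φ,θ)(τ) · ( ∂²_{φφ} log(π φ s_k a_k) · Q̂ φ θ s_k a_k + ∂_φ log(π φ s_k a_k) · ∂_φ (Q̂ φ θ s_k a_k) + ∂_φ log(π φ s_k a_k) · Q̂ φ θ s_k a_k · Σ_{i=0}^{k} ∂_φ log(π φ s_i a_i) ), i.e., it decomposes into a Hessian term, a critic-sensitivity term, and a distribution-sensitivity term. (Decomposition of ∇_φ ĝ used in Theorem 1, Eq. (19).) -/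
/-- Decomposition of `∇_φ ĝ` (used in Theorem 1, Eq. (19)): the partial derivative of
the finite-horizon in-sim stochastic policy gradient w.r.t. the policy parameter `φ`
exists and decomposes into a Hessian term, a critic-sensitivity term, and a
distribution-sensitivity term. -/
theorem spg_sensitivity_wrt_policy_params
    {S A : Type*} [Fintype S] [Fintype A] [Nonempty S] [Nonempty A]
    (N : ℕ) (γ : ℝ) (ρ0 : S → ℝ)
    (π : ℝ → S → A → ℝ) (f : ℝ → S → A → S → ℝ)
    (Qh : ℝ → ℝ → S → A → ℝ)
    (hπpos : ∀ φ s a, 0 < π φ s a)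
    (hπdiff : ∀ s a, Differentiable ℝ (fun φ => π φ s a))
    (hπdiff2 : ∀ s a, Differentiable ℝ (deriv (fun φ => π φ s a)))
    (hfpos : ∀ θ s a s', 0 < f θ s a s')
    (hfdiff : ∀ s a s', Differentiable ℝ (fun θ => f θ s a s'))
    (hQdiffφ : ∀ θ s a, Differentiable ℝ (fun φ => Qh φ θ s a))
    (hQdiffθ : ∀ φ s a, Differentiable ℝ (fun θ => Qh φ θ s a))
    (P : ∀ k : ℕ, ℝ → ℝ → ((Fin (k + 1) → S) × (Fin (k + 1) → A)) → ℝ)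
    (hP : ∀ k φ θ τ, P k φ θ τ =
      ρ0 (τ.1 0) * π φ (τ.1 (Fin.last k)) (τ.2 (Fin.last k)) *
        ∏ i : Fin k,
          (f θ (τ.1 i.castSucc) (τ.2 i.castSucc) (τ.1 i.succ) *
            π φ (τ.1 i.castSucc) (τ.2 i.castSucc)))
    (φ θ : ℝ) :
    HasDerivAt
      (fun φ' => ∑ k ∈ Finset.range (N + 1), γ ^ k *
        ∑ τ : (Fin (k + 1) → S) × (Fin (k + 1) → A),
          P k φ' θ τ *
            deriv (fun φ'' => Real.log (π φ'' (τ.1 (Fin.last k)) (τ.2 (Fin.last k)))) φ' *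
            Qh φ' θ (τ.1 (Fin.last k)) (τ.2 (Fin.last k)))
      (∑ k ∈ Finset.range (N + 1), γ ^ k *
        ∑ τ : (Fin (k + 1) → S) × (Fin (k + 1) → A),
          P k φ θ τ *
            (deriv (deriv (fun φ' => Real.log (π φ' (τ.1 (Fin.last k)) (τ.2 (Fin.last k))))) φ *
                Qh φ θ (τ.1 (Fin.last k)) (τ.2 (Fin.last k)) +
              deriv (fun φ' => Real.log (π φ' (τ.1 (Fin.last k)) (τ.2 (Fin.last k)))) φ *
                deriv (fun φ' => Qh φ' θ (τ.1 (Fin.last k)) (τ.2 (Fin.last k))) φ +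
              deriv (fun φ' => Real.log (π φ' (τ.1 (Fin.last k)) (τ.2 (Fin.last k)))) φ *
                Qh φ θ (τ.1 (Fin.last k)) (τ.2 (Fin.last k)) *
                ∑ i : Fin (k + 1),
                  deriv (fun φ' => Real.log (π φ' (τ.1 i) (τ.2 i))) φ)) φ := by
  have hlog : ∀ s a x, DifferentiableAt ℝ (fun φ' => Real.log (π φ' s a)) x := fun s a x =>
    (hπdiff s a x).log (hπpos x s a).ne'
  have hlog2 : ∀ s a x, DifferentiableAt ℝ (deriv (fun φ' => Real.log (π φ' s a))) x := by
    intro s a x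
    have h : deriv (fun φ' => Real.log (π φ' s a)) =
        fun y => deriv (fun φ' => π φ' s a) y / π y s a := by
      funext y
      exact deriv.log (hπdiff s a y) (hπpos y s a).ne'
    rw [h]
    exact (hπdiff2 s a x).div (hπdiff s a x) (hπpos x s a).ne'
  have hPexp : ∀ k x (τ : (Fin (k + 1) → S) × (Fin (k + 1) → A)), P k x θ τ =
      (ρ0 (τ.1 0) * ∏ i : Fin k, f θ (τ.1 i.castSucc) (τ.2 i.castSucc) (τ.1 i.succ)) *
        Real.exp (∑ i : Fin (k + 1), Real.log (π x (τ.1 i) (τ.2 i))) := by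
    intro k x τ
    rw [hP, Real.exp_sum]
    simp only [Real.exp_log (hπpos _ _ _)]
    rw [Fin.prod_univ_castSucc, Finset.prod_mul_distrib]
    ring
  have hPd : ∀ k (τ : (Fin (k + 1) → S) × (Fin (k + 1) → A)),
      HasDerivAt (fun x => P k x θ τ)
        (P k φ θ τ * ∑ i : Fin (k + 1), deriv (fun φ' => Real.log (π φ' (τ.1 i) (τ.2 i))) φ) φ := by
    intro k τ
    simp only [hPexp]
    have h1 : HasDerivAt (fun x => ∑ i : Fin (k + 1), Real.log (π x (τ.1 i) (τ.2 i)))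
        (∑ i : Fin (k + 1), deriv (fun φ' => Real.log (π φ' (τ.1 i) (τ.2 i))) φ) φ :=
      HasDerivAt.fun_sum fun i _ => (hlog (τ.1 i) (τ.2 i) φ).hasDerivAt
    rw [mul_assoc]
    exact h1.exp.const_mul _
  refine HasDerivAt.fun_sum fun k _ => HasDerivAt.const_mul _ (HasDerivAt.fun_sum fun τ _ => ?_)
  have h := ((hPd k τ).fun_mul (hlog2 (τ.1 (Fin.last k)) (τ.2 (Fin.last k)) φ).hasDerivAt).fun_mul
    (hQdiffφ θ (τ.1 (Fin.last k)) (τ.2 (Fin.last k)) φ).hasDerivAt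
  refine h.congr_deriv ?_
  ring
end
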